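/- Let λ₁ and λ₂ be post-processings from n outcomes to m outcomes. Then F(λ₁,λ₂) = min over i ∈ {1,…,n} of Σ_{y=1}^m √(λ₁(i|y)·λ₂(i|y)). In particular the infimum defining F(λ₁,λ₂) is attained at a point mass. -/

import Mathlib

open scoped BigOperators Kronecker ComplexOrder Matrix

noncomputable section


namespace QProg

/-- The positive semidefinite square root of a positive semidefinite matrix
(the definition of the older Mathlib, since removed). -/
noncomputable def _root_.Matrix.PosSemidef.sqrt {n 𝕜 : Type*} [Fintype n] [RCLike 𝕜]
    [DecidableEq n] {A : Matrix n n 𝕜} (hA : A.PosSemidef) : Matrix n n 𝕜 :=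
  hA.1.eigenvectorUnitary.1 * Matrix.diagonal ((↑) ∘ Real.sqrt ∘ hA.1.eigenvalues) *
    (star hA.1.eigenvectorUnitary : Matrix n n 𝕜)

/-- The positive-semidefinite square root of a matrix, extended by `0` to all matrices. -/
noncomputable def matSqrt {α : Type*} [Fintype α] [DecidableEq α]
    (A : Matrix α α ℂ) : Matrix α α ℂ :=
  @dite _ A.PosSemidef (Classical.propDecidable _) (fun h => h.sqrt) (fun _ => 0)

/-- The fidelity `F(ρ,σ) = Tr √(√ρ σ √ρ)` of two (density) matrices. -/
noncomputable def fid {α : Type*} [Fintype α] [DecidableEq α]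
    (ρ σ : Matrix α α ℂ) : ℝ :=
  ((matSqrt (matSqrt ρ * σ * matSqrt ρ)).trace).re

/-- A density matrix: positive semidefinite with unit trace. -/
def IsDensity {α : Type*} [Fintype α] [DecidableEq α] (ρ : Matrix α α ℂ) : Prop :=
  ρ.PosSemidef ∧ ρ.trace = 1

/-- An `n`-outcome POVM: positive semidefinite effects summing to the identity. -/
def IsPOVM {α : Type*} [Fintype α] [DecidableEq α] {n : ℕ}
    (E : Fin n → Matrix α α ℂ) : Prop :=
  (∀ i, (E i).PosSemidef) ∧ ∑ i, E i = 1

/-- The outcome distribution `p^E_ρ(i) = Tr[E(i) ρ]`. -/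
noncomputable def outDist {α : Type*} [Fintype α] [DecidableEq α] {n : ℕ}
    (E : Fin n → Matrix α α ℂ) (ρ : Matrix α α ℂ) (i : Fin n) : ℝ :=
  ((E i * ρ).trace).re

/-- The Bhattacharyya coefficient `B(p,q) = ∑ᵢ √(p i) √(q i)`. -/
noncomputable def bhat {n : ℕ} (p q : Fin n → ℝ) : ℝ :=
  ∑ i, Real.sqrt (p i) * Real.sqrt (q i)

/-- `B(E₁,E₂)`: infimum of `B(p^{E₁}_{ρ₁}, p^{E₂}_{ρ₂}) / F(ρ₁,ρ₂)` over pairs of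
density matrices with nonvanishing fidelity. -/
noncomputable def obsB {α : Type*} [Fintype α] [DecidableEq α] {n : ℕ}
    (E₁ E₂ : Fin n → Matrix α α ℂ) : ℝ :=
  sInf { r : ℝ | ∃ ρ₁ ρ₂ : Matrix α α ℂ, IsDensity ρ₁ ∧ IsDensity ρ₂ ∧
    fid ρ₁ ρ₂ ≠ 0 ∧ r = bhat (outDist E₁ ρ₁) (outDist E₂ ρ₂) / fid ρ₁ ρ₂ }

/-- A post-processing from `n` outcomes to `m` outcomes. -/
def IsPostProc {n m : ℕ} (lam : Fin n → Fin m → ℝ) : Prop :=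
  (∀ i y, 0 ≤ lam i y) ∧ ∀ i, ∑ y, lam i y = 1

/-- The action `(λ⋆E)(y) = ∑ᵢ λ(i|y) E(i)` of a post-processing on a POVM. -/
noncomputable def ppStar {α : Type*} [Fintype α] [DecidableEq α] {n m : ℕ}
    (lam : Fin n → Fin m → ℝ) (E : Fin n → Matrix α α ℂ) (y : Fin m) :
    Matrix α α ℂ :=
  ∑ i, (lam i y : ℂ) • E i

/-- The action `(λ⋆p)(y) = ∑ᵢ λ(i|y) p(i)` of a post-processing on a probability vector. -/
noncomputable def ppStarVec {n m : ℕ} (lam : Fin n → Fin m → ℝ) (p : Fin n → ℝ)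
    (y : Fin m) : ℝ :=
  ∑ i, lam i y * p i

/-- A probability vector on `{1,…,n}`. -/
def IsProbVec {n : ℕ} (p : Fin n → ℝ) : Prop :=
  (∀ i, 0 ≤ p i) ∧ ∑ i, p i = 1

/-- `F(λ₁,λ₂)`: infimum of `B(λ₁⋆p, λ₂⋆p)` over probability vectors `p`. -/
noncomputable def ppF {n m : ℕ} (lam₁ lam₂ : Fin n → Fin m → ℝ) : ℝ :=
  sInf { r : ℝ | ∃ p : Fin n → ℝ, IsProbVec p ∧
    r = bhat (ppStarVec lam₁ p) (ppStarVec lam₂ p) }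

/-! The Bhattacharyya coefficient is homogeneous and, by Cauchy–Schwarz at each outcome,
superadditive. Since `λ⋆p` is the mixture of the rows of `λ` with weights `p`, the coefficient of
`λ₁⋆p` and `λ₂⋆p` is at least the `p`-average of the coefficients of the rows, hence at least the
smallest of them; a point mass at a minimizing row gives equality. -/

theorem bhat_smul_smul {m : ℕ} {a : ℝ} (ha : 0 ≤ a) (u v : Fin m → ℝ) :
    bhat (a • u) (a • v) = a * bhat u v := by
  simp only [bhat, Pi.smul_apply, smul_eq_mul, Finset.mul_sum]
  refine Finset.sum_congr rfl fun y _ => ?_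
  rw [Real.sqrt_mul ha, Real.sqrt_mul ha, mul_mul_mul_comm, Real.mul_self_sqrt ha]

theorem sum_bhat_le_bhat_sum {ι : Type*} {m : ℕ} (s : Finset ι) {u v : ι → Fin m → ℝ}
    (hu : 0 ≤ u) (hv : 0 ≤ v) :
    ∑ i ∈ s, bhat (u i) (v i) ≤ bhat (∑ i ∈ s, u i) (∑ i ∈ s, v i) := by
  simp only [bhat, Finset.sum_apply]
  rw [Finset.sum_comm]
  exact Finset.sum_le_sum fun y _ =>
    Real.sum_sqrt_mul_sqrt_le s (fun i => hu i y) (fun i => hv i y)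

section PostProcessing

variable {n m : ℕ}

theorem ppStarVec_eq_sum_smul (lam : Fin n → Fin m → ℝ) (p : Fin n → ℝ) :
    ppStarVec lam p = ∑ i, p i • lam i := by
  ext y
  simp only [ppStarVec, Finset.sum_apply, Pi.smul_apply, smul_eq_mul, mul_comm]

theorem ppStarVec_single_one (lam : Fin n → Fin m → ℝ) (i : Fin n) :
    ppStarVec lam (Pi.single i 1) = lam i := by
  simp [ppStarVec_eq_sum_smul, Pi.single_apply]

theorem sum_mul_bhat_le_bhat_ppStarVec {lam₁ lam₂ : Fin n → Fin m → ℝ} {p : Fin n → ℝ}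
    (hlam₁ : 0 ≤ lam₁) (hlam₂ : 0 ≤ lam₂) (hp : 0 ≤ p) :
    ∑ i, p i * bhat (lam₁ i) (lam₂ i) ≤ bhat (ppStarVec lam₁ p) (ppStarVec lam₂ p) := by
  calc ∑ i, p i * bhat (lam₁ i) (lam₂ i)
      = ∑ i, bhat (p i • lam₁ i) (p i • lam₂ i) :=
        Finset.sum_congr rfl fun i _ => (bhat_smul_smul (hp i) _ _).symm
    _ ≤ bhat (∑ i, p i • lam₁ i) (∑ i, p i • lam₂ i) :=
        sum_bhat_le_bhat_sum _ (fun i => smul_nonneg (hp i) (hlam₁ i))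
          (fun i => smul_nonneg (hp i) (hlam₂ i))
    _ = bhat (ppStarVec lam₁ p) (ppStarVec lam₂ p) := by
        simp only [ppStarVec_eq_sum_smul]

theorem IsProbVec.inf'_le_sum_mul {p : Fin n → ℝ} (hp : IsProbVec p)
    (hne : (Finset.univ : Finset (Fin n)).Nonempty) (f : Fin n → ℝ) :
    Finset.univ.inf' hne f ≤ ∑ i, p i * f i := by
  have hsum : 0 < ∑ i, p i := hp.2 ▸ one_pos
  simpa only [Finset.centerMass_eq_of_sum_1 _ _ hp.2, smul_eq_mul] using
    Finset.inf_le_centerMass (f := f) (fun i _ => hp.1 i) hsum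

theorem ppF_eq_min_general (hne : (Finset.univ : Finset (Fin n)).Nonempty)
    {lam₁ lam₂ : Fin n → Fin m → ℝ} (hlam₁ : 0 ≤ lam₁) (hlam₂ : 0 ≤ lam₂) :
    IsLeast {r : ℝ | ∃ p : Fin n → ℝ, IsProbVec p ∧
        r = bhat (ppStarVec lam₁ p) (ppStarVec lam₂ p)}
      (Finset.univ.inf' hne fun i => bhat (lam₁ i) (lam₂ i)) := by
  constructor
  · obtain ⟨i, -, hmin⟩ := Finset.exists_mem_eq_inf' hne fun i => bhat (lam₁ i) (lam₂ i)
    refine ⟨Pi.single i 1, single_mem_stdSimplex ℝ i, ?_⟩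
    rw [hmin, ppStarVec_single_one, ppStarVec_single_one]
  · rintro _ ⟨p, hp, rfl⟩
    exact (hp.inf'_le_sum_mul hne _).trans (sum_mul_bhat_le_bhat_ppStarVec hlam₁ hlam₂ hp.1)

end PostProcessing

/-- Lemma of Section 4.2:
`F(λ₁,λ₂) = minᵢ ∑_y √(λ₁(i|y) λ₂(i|y))`; the infimum is attained at a point mass. -/
theorem ppF_eq_min {n m : ℕ} (hn : 0 < n)
    (lam₁ lam₂ : Fin n → Fin m → ℝ) (hlam₁ : IsPostProc lam₁) (hlam₂ : IsPostProc lam₂) :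
    ppF lam₁ lam₂ =
      Finset.univ.inf' (Finset.univ_nonempty_iff.mpr ⟨⟨0, hn⟩⟩)
        (fun i => ∑ y, Real.sqrt (lam₁ i y) * Real.sqrt (lam₂ i y)) :=
  (ppF_eq_min_general _ hlam₁.1 hlam₂.1).csInf_eq

end QProg
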